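/- Let T be a noncrossing tree on [n+1], let T_1, …, T_k be the noncrossing alternating spanning trees of the transitive closure T̄, indexed so that P(T_1) <lex ⋯ <lex P(T_k), and for m = 1, …, k let r_m = #{e ∈ E(T_m) : P(T_m − e) ⊆ P(T_1) ∪ ⋯ ∪ P(T_{m−1})} (so r_1 = 0). Then in the formal power series ring ℚ[[x]]: (1 − x)^{n+1} · (1 + Σ_{t≥1} #(tP(T) ∩ ℤ^{n+1}) x^t) = Σ_{m=1}^{k} x^{r_m}. -/

import Mathlib

open scoped BigOperators

namespace RPaper

abbrev Vtype (n : ℕ) := Fin (n+1) → ℝ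

abbrev Edge (n : ℕ) := Fin (n+1) × Fin (n+1)

abbrev EdgeSet (n : ℕ) := Finset (Edge n)

/-- The vector `e_i - e_j`. -/
def ev {n : ℕ} (i j : Fin (n+1)) : Vtype n := Pi.single i 1 - Pi.single j 1

/-- Edges are stored as pairs `(i,j)` with `i < j`. -/
def IsGraph {n : ℕ} (E : EdgeSet n) : Prop := ∀ e ∈ E, e.1 < e.2

/-- The simple graph underlying an edge set. -/
def toSG {n : ℕ} (E : EdgeSet n) : SimpleGraph (Fin (n+1)) :=
  SimpleGraph.fromRel (fun a b => (a, b) ∈ E)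

def Acyclic {n : ℕ} (E : EdgeSet n) : Prop := (toSG E).IsAcyclic

def IsForest {n : ℕ} (E : EdgeSet n) : Prop := IsGraph E ∧ Acyclic E

/-- A tree on the full vertex set `[n+1]`: connected and acyclic. -/
def IsTreeG {n : ℕ} (E : EdgeSet n) : Prop := IsGraph E ∧ (toSG E).IsTree

def Noncrossing {n : ℕ} (E : EdgeSet n) : Prop :=
  ¬ ∃ i j k l : Fin (n+1), i < j ∧ j < k ∧ k < l ∧ (i, k) ∈ E ∧ (j, l) ∈ E

def Alternating {n : ℕ} (E : EdgeSet n) : Prop :=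
  ¬ ∃ i j k : Fin (n+1), i < j ∧ j < k ∧ (i, j) ∈ E ∧ (j, k) ∈ E

/-- The positive roots `e_i - e_j`, `i < j`. -/
def PhiPlus (n : ℕ) : Set (Vtype n) := {v | ∃ i j : Fin (n+1), i < j ∧ v = ev i j}

/-- The cone of nonnegative combinations of the vectors of `E`. -/
def cone {n : ℕ} (E : EdgeSet n) : Set (Vtype n) :=
  {x | ∃ c : Edge n → ℝ, (∀ e, 0 ≤ c e) ∧ x = ∑ e ∈ E, c e • ev e.1 e.2}

def Vbar {n : ℕ} (E : EdgeSet n) : Set (Vtype n) := PhiPlus n ∩ cone E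

/-- The root polytope of a graph. -/
def RootPoly {n : ℕ} (E : EdgeSet n) : Set (Vtype n) := convexHull ℝ ({0} ∪ Vbar E)

/-- The full root polytope `P(A_n^+)`. -/
def FullRootPoly (n : ℕ) : Set (Vtype n) := convexHull ℝ ({0} ∪ PhiPlus n)

/-- Transitive closure: `(i,j)`, `i<j`, whenever there is an increasing path in `E`. -/
def closureT {n : ℕ} (E : EdgeSet n) : Set (Edge n) :=
  {p | p.1 < p.2 ∧ Relation.TransGen (fun a b => a < b ∧ (a, b) ∈ E) p.1 p.2}

/-- Noncrossing alternating spanning trees of the transitive closure of `E`. -/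
def NCASpanningTrees {n : ℕ} (E : EdgeSet n) : Set (EdgeSet n) :=
  {F | IsTreeG F ∧ Noncrossing F ∧ Alternating F ∧ ↑F ⊆ closureT E}

/-- The `t`-th dilate of a set. -/
def dilate {n : ℕ} (t : ℕ) (P : Set (Vtype n)) : Set (Vtype n) := (fun x => (t : ℝ) • x) '' P

/-- Number of lattice points of the `t`-th dilate. -/
noncomputable def latticeCount {n : ℕ} (P : Set (Vtype n)) (t : ℕ) : ℕ :=
  Set.ncard {x ∈ dilate t P | ∀ i, ∃ z : ℤ, x i = (z : ℝ)}

/-- Dimension of the affine span of a set. -/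
noncomputable def polyDim {n : ℕ} (P : Set (Vtype n)) : ℕ :=
  Module.finrank ℝ (affineSpan ℝ P).direction

/-- The points `0` and `e_i - e_j`, `(i,j) ∈ F`. -/
def vertSet {n : ℕ} (F : EdgeSet n) : Set (Vtype n) :=
  {0} ∪ {v | ∃ e ∈ F, v = ev e.1 e.2}

/-- `e ≤ f` where edges are ordered by first coordinate, then second coordinate. -/
def edgeLE {n : ℕ} (e f : Edge n) : Prop :=
  e.1 < f.1 ∨ (e.1 = f.1 ∧ e.2 ≤ f.2)

/-- `A <lex B`: at the first position where the increasing edge lists of `A` and `B`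
differ, the edge of `A` is smaller; equivalently (for sets of equal size), the smallest
edge in the symmetric difference belongs to `A`. -/
def treeLexLT {n : ℕ} (A B : EdgeSet n) : Prop :=
  ∃ e ∈ A, e ∉ B ∧ ∀ f ∈ (A \ B) ∪ (B \ A), edgeLE e f

/-!
For a noncrossing alternating graph `F` a point of `cone F` is the net flow of a unique flow on `F`,
and the flow does not even depend on `F`; its total weight is the sum of the positive coordinates.
Every lattice point of `cone T` is a sum of edge vectors of `T̄`, and replacing crossing or
consecutive edges rewrites this sum until its support lies in one of the trees `T_m`. Hence the
cones of the `T_m` triangulate `cone T` unimodularly, and the lattice points of `tP(T)` are the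
net flows of the natural flows of total weight at most `t`.

The lexicographic order shells this triangulation: if `A` precedes `B`, then some edge of `B` not in
`A` can be flipped so that the resulting tree precedes `B`. So each lattice point is counted once by
taking, for every `m`, the flows on `T_m` that are positive on the `r_m` edges whose opposite facets
are already covered. Those have generating function `x^{r_m} / (1 - x)^{n+1}`: one factor for each
of the `n` edges and one for the slack `t` minus the total weight.
-/

section

variable {n : ℕ} {E F F' T : EdgeSet n} {c c' : Edge n → ℝ} {x y : Vtype n}

section NetFlow

/-- The net flow of an edge weighting `c` of the complete graph: outflow minus inflow at each
vertex. Weightings of a graph `E` are encoded as weightings of all pairs that vanish off `E`. -/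
def netFlow : (Edge n → ℝ) →ₗ[ℝ] Vtype n :=
  Fintype.linearCombination ℝ (fun e : Edge n => ev e.1 e.2)

lemma netFlow_single (e : Edge n) (a : ℝ) : netFlow (Pi.single e a) = a • ev e.1 e.2 :=
  Fintype.linearCombination_apply_single ℝ _ e a

lemma netFlow_eq_sum_of_eq_zero (h : ∀ e ∉ F, c e = 0) :
    netFlow c = ∑ e ∈ F, c e • ev e.1 e.2 :=
  (Finset.sum_subset (Finset.subset_univ F) fun e _ he => by rw [h e he, zero_smul]).symm

lemma netFlow_apply (c : Edge n → ℝ) (v : Fin (n + 1)) :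
    netFlow c v = ∑ j, c (v, j) - ∑ j, c (j, v) := by
  simp only [netFlow, Fintype.linearCombination_apply, ev, Finset.sum_apply, Pi.smul_apply,
    Pi.sub_apply, Pi.single_apply, smul_eq_mul, mul_sub, mul_ite, mul_one, mul_zero,
    Finset.sum_sub_distrib]
  rw [Fintype.sum_prod_type, Fintype.sum_prod_type_right]
  congr 1 <;> rw [Finset.sum_comm] <;> simp

/-- A (nonnegative) flow on the graph `F`: a nonnegative edge weighting supported on `F`. -/
structure IsFlowOn (F : EdgeSet n) (c : Edge n → ℝ) : Prop where
  nonneg : 0 ≤ c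
  eq_zero : ∀ e ∉ F, c e = 0

namespace IsFlowOn

lemma mono (h : IsFlowOn F c) (hFE : F ⊆ E) : IsFlowOn E c :=
  ⟨h.nonneg, fun e he => h.eq_zero e fun heF => he (hFE heF)⟩

lemma mem_of_ne_zero (h : IsFlowOn F c) {e : Edge n} (he : c e ≠ 0) : e ∈ F :=
  not_imp_comm.1 (h.eq_zero e) he

lemma add (h : IsFlowOn F c) (h' : IsFlowOn F c') : IsFlowOn F (c + c') :=
  ⟨add_nonneg h.nonneg h'.nonneg, fun e he => by simp [h.eq_zero e he, h'.eq_zero e he]⟩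

lemma smul (h : IsFlowOn F c) {a : ℝ} (ha : 0 ≤ a) : IsFlowOn F (a • c) :=
  ⟨smul_nonneg ha h.nonneg, fun e he => by simp [h.eq_zero e he]⟩

lemma single {e : Edge n} (he : e ∈ F) {a : ℝ} (ha : 0 ≤ a) : IsFlowOn F (Pi.single e a) :=
  ⟨Pi.single_nonneg.2 ha, fun _ hf => by simp [(ne_of_mem_of_not_mem he hf).symm]⟩

lemma erase (h : IsFlowOn F c) {e : Edge n} (he : c e = 0) : IsFlowOn (F.erase e) c :=
  ⟨h.nonneg, fun f hf => by
    obtain rfl | hfe := eq_or_ne f e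
    · exact he
    · exact h.eq_zero f fun hfF => hf (Finset.mem_erase.2 ⟨hfe, hfF⟩)⟩

end IsFlowOn

lemma mem_cone_iff : x ∈ cone E ↔ ∃ c, IsFlowOn E c ∧ netFlow c = x := by
  constructor
  · rintro ⟨c, hc, rfl⟩
    refine ⟨fun e => if e ∈ E then c e else 0, ⟨fun e => ?_, fun e he => if_neg he⟩, ?_⟩
    · by_cases he : e ∈ E <;> simp [he, hc e]
    · rw [netFlow_eq_sum_of_eq_zero fun e he => if_neg he]
      exact Finset.sum_congr rfl fun e he => by rw [if_pos he]
  · rintro ⟨c, hc, rfl⟩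
    exact ⟨c, hc.nonneg, netFlow_eq_sum_of_eq_zero hc.eq_zero⟩

lemma cone_mono (h : F ⊆ E) : cone F ⊆ cone E := fun x hx => by
  obtain ⟨c, hc, rfl⟩ := mem_cone_iff.1 hx
  exact mem_cone_iff.2 ⟨c, hc.mono h, rfl⟩

lemma add_mem_cone (hx : x ∈ cone E) (hy : y ∈ cone E) : x + y ∈ cone E := by
  obtain ⟨c, hc, rfl⟩ := mem_cone_iff.1 hx
  obtain ⟨c', hc', rfl⟩ := mem_cone_iff.1 hy
  exact mem_cone_iff.2 ⟨c + c', hc.add hc', map_add netFlow c c'⟩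

lemma smul_mem_cone {a : ℝ} (ha : 0 ≤ a) (hx : x ∈ cone E) : a • x ∈ cone E := by
  obtain ⟨c, hc, rfl⟩ := mem_cone_iff.1 hx
  exact mem_cone_iff.2 ⟨a • c, hc.smul ha, map_smul netFlow a c⟩

lemma ev_mem_cone {e : Edge n} (he : e ∈ E) : ev e.1 e.2 ∈ cone E :=
  mem_cone_iff.2 ⟨_, .single he zero_le_one, (netFlow_single e 1).trans (one_smul ℝ _)⟩

end NetFlow

section Uniqueness

/-- The edges `e` and `f` cross, in either order. -/
def Crosses (e f : Edge n) : Prop :=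
  (e.1 < f.1 ∧ f.1 < e.2 ∧ e.2 < f.2) ∨ (f.1 < e.1 ∧ e.1 < f.2 ∧ f.2 < e.2)

lemma Crosses.symm {e f : Edge n} (h : Crosses e f) : Crosses f e := Or.symm h

/-- A noncrossing alternating graph, connected or not, with both conditions stated pairwise. -/
structure IsNCA (F : EdgeSet n) : Prop where
  isGraph : IsGraph F
  not_crosses : ∀ e ∈ F, ∀ f ∈ F, ¬ Crosses e f
  snd_ne_fst : ∀ e ∈ F, ∀ f ∈ F, e.2 ≠ f.1

lemma isNCA_iff : IsNCA F ↔ IsGraph F ∧ Noncrossing F ∧ Alternating F := by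
  refine ⟨fun h => ⟨h.isGraph, ?_, ?_⟩, fun ⟨hgraph, hnc, halt⟩ => ⟨hgraph, ?_, ?_⟩⟩
  · rintro ⟨i, j, k, l, hij, hjk, hkl, hik, hjl⟩
    exact h.not_crosses _ hik _ hjl (Or.inl ⟨hij, hjk, hkl⟩)
  · rintro ⟨i, j, k, -, -, hij, hjk⟩
    exact h.snd_ne_fst _ hij _ hjk rfl
  · rintro e he f hf (⟨h₁, h₂, h₃⟩ | ⟨h₁, h₂, h₃⟩)
    · exact hnc ⟨e.1, f.1, e.2, f.2, h₁, h₂, h₃, he, hf⟩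
    · exact hnc ⟨f.1, e.1, f.2, e.2, h₁, h₂, h₃, hf, he⟩
  · rintro ⟨i, j⟩ hij ⟨_, k⟩ hjk rfl
    exact halt ⟨i, j, k, hgraph _ hij, hgraph _ hjk, hij, hjk⟩

lemma IsNCA.mono (hF : IsNCA F) (h : F' ⊆ F) : IsNCA F' where
  isGraph e he := hF.isGraph e (h he)
  not_crosses e he f hf := hF.not_crosses e (h he) f (h hf)
  snd_ne_fst e he f hf := hF.snd_ne_fst e (h he) f (h hf)

lemma IsNCA.sum_out_eq_posPart (hF : IsNCA F) (hc : IsFlowOn F c) (v : Fin (n + 1)) :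
    ∑ j, c (v, j) = (netFlow c v)⁺ := by
  have hout : 0 ≤ ∑ j, c (v, j) := Finset.sum_nonneg fun j _ => hc.nonneg _
  have hin : 0 ≤ ∑ j, c (j, v) := Finset.sum_nonneg fun j _ => hc.nonneg _
  rw [netFlow_apply]
  by_cases h : ∃ j, c (v, j) ≠ 0
  · obtain ⟨j, hj⟩ := h
    have hin_zero : ∑ k, c (k, v) = 0 := Finset.sum_eq_zero fun k _ => by_contra fun hk =>
      hF.snd_ne_fst _ (hc.mem_of_ne_zero hk) _ (hc.mem_of_ne_zero hj) rfl
    rw [hin_zero, sub_zero, posPart_of_nonneg hout]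
  · push Not at h
    rw [Finset.sum_eq_zero fun k _ => h k, zero_sub, posPart_of_nonpos (neg_nonpos.2 hin)]

lemma IsNCA.sum_in_eq_negPart (hF : IsNCA F) (hc : IsFlowOn F c) (v : Fin (n + 1)) :
    ∑ j, c (j, v) = (netFlow c v)⁻ := by
  have hsub := posPart_sub_negPart (netFlow c v)
  rw [← hF.sum_out_eq_posPart hc v] at hsub
  linarith [netFlow_apply c v]

/-- The sum of the positive coordinates. On the cone of an alternating graph it is the total weight
of any flow with the given net flow, which makes it the grading that counts dilates. -/
def posSum (x : Vtype n) : ℝ := ∑ v, (x v)⁺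

lemma IsNCA.sum_eq_posSum (hF : IsNCA F) (hc : IsFlowOn F c) : ∑ e, c e = posSum (netFlow c) := by
  rw [Fintype.sum_prod_type, posSum]
  exact Finset.sum_congr rfl fun v _ => hF.sum_out_eq_posPart hc v

lemma exists_lt_of_sum_le_of_lt {ι : Type*} [Fintype ι] {f g : ι → ℝ}
    (hsum : ∑ k, f k ≤ ∑ k, g k) {j : ι} (hj : g j < f j) : ∃ k, f k < g k := by
  by_contra! hle
  exact hsum.not_gt (Finset.sum_lt_sum (fun k _ => hle k) ⟨j, Finset.mem_univ j, hj⟩)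

/- A shortest edge `(i, j)` on which `c' < c` must be compensated at `i` and at `j` by longer edges
`(i, k)` and `(l, j)` carrying `c'`; these two cross. -/
lemma IsNCA.le_of_netFlow_eq (hF : IsNCA F) (hF' : IsNCA F') (hc : IsFlowOn F c)
    (hc' : IsFlowOn F' c') (h : netFlow c = netFlow c') {i j : Fin (n + 1)}
    (shorter : ∀ i' j' : Fin (n + 1), (j' : ℕ) - i' < (j : ℕ) - i → c (i', j') = c' (i', j')) :
    c (i, j) ≤ c' (i, j) := by
  by_contra! hlt
  have hij : i < j :=
    hF.isGraph _ (hc.mem_of_ne_zero ((hc'.nonneg (i, j)).trans_lt hlt).ne')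
  have hout : ∑ k, c (i, k) = ∑ k, c' (i, k) := by
    rw [hF.sum_out_eq_posPart hc, hF'.sum_out_eq_posPart hc', h]
  have hin : ∑ k, c (k, j) = ∑ k, c' (k, j) := by
    rw [hF.sum_in_eq_negPart hc, hF'.sum_in_eq_negPart hc', h]
  obtain ⟨k, hk⟩ := exists_lt_of_sum_le_of_lt hout.le hlt
  obtain ⟨l, hl⟩ := exists_lt_of_sum_le_of_lt hin.le hlt
  have hik := hc'.mem_of_ne_zero ((hc.nonneg (i, k)).trans_lt hk).ne'
  have hlj := hc'.mem_of_ne_zero ((hc.nonneg (l, j)).trans_lt hl).ne'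
  have hjk : j < k := by
    by_contra! hkj
    obtain rfl | hkj := hkj.eq_or_lt
    · exact hk.not_gt hlt
    · exact hk.ne (shorter i k (by have := hF'.isGraph _ hik; grind))
  have hli : l < i := by
    by_contra! hil
    obtain rfl | hil := hil.eq_or_lt
    · exact hl.not_gt hlt
    · exact hl.ne (shorter l j (by have := hF'.isGraph _ hlj; grind))
  exact hF'.not_crosses _ hlj _ hik (Or.inl ⟨hli, hij, hjk⟩)

theorem IsNCA.flow_unique (hF : IsNCA F) (hF' : IsNCA F') (hc : IsFlowOn F c)
    (hc' : IsFlowOn F' c') (h : netFlow c = netFlow c') : c = c' := by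
  funext ⟨i, j⟩
  induction hd : (j : ℕ) - i using Nat.strong_induction_on generalizing i j with
  | _ d ih =>
    subst hd
    exact le_antisymm
      (hF.le_of_netFlow_eq hF' hc hc' h fun i' j' hlt => ih _ hlt i' j' rfl)
      (hF'.le_of_netFlow_eq hF hc' hc h.symm fun i' j' hlt => (ih _ hlt i' j' rfl).symm)

lemma IsNCA.eq_zero_of_netFlow_eq_zero (hF : IsNCA F) (hc : ∀ e ∉ F, c e = 0)
    (h : netFlow c = 0) : c = 0 := by
  have hpos : IsFlowOn F c⁺ := ⟨posPart_nonneg c, fun e he => by simp [hc e he]⟩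
  have hneg : IsFlowOn F c⁻ := ⟨negPart_nonneg c, fun e he => by simp [hc e he]⟩
  have hsub : c⁺ - c⁻ = c := posPart_sub_negPart c
  rw [← hsub, map_sub, sub_eq_zero] at h
  rw [← hsub, sub_eq_zero]
  exact hF.flow_unique hF hpos hneg h

theorem IsNCA.linearIndepOn (hF : IsNCA F) :
    LinearIndepOn ℝ (fun e : Edge n => ev e.1 e.2) (F : Set (Edge n)) := by
  rw [linearIndepOn_finset_iff]
  intro c hc e he
  have hd : ∀ f ∉ F, (if f ∈ F then c f else 0) = 0 := fun f hf => if_neg hf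
  have h := hF.eq_zero_of_netFlow_eq_zero hd ((netFlow_eq_sum_of_eq_zero hd).trans
    ((Finset.sum_congr rfl fun f hf => by rw [if_pos hf]).trans hc))
  simpa only [he, if_true, Pi.zero_apply] using congrFun h e

end Uniqueness

section Trees

lemma toSG_adj {a b : Fin (n + 1)} : (toSG F).Adj a b ↔ a ≠ b ∧ ((a, b) ∈ F ∨ (b, a) ∈ F) :=
  SimpleGraph.fromRel_adj _ a b

lemma IsGraph.adj (hF : IsGraph F) {e : Edge n} (he : e ∈ F) : (toSG F).Adj e.1 e.2 :=
  toSG_adj.2 ⟨(hF e he).ne, Or.inl he⟩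

lemma IsGraph.deleteEdges_toSG (hF : IsGraph F) {e : Edge n} (he : e ∈ F) :
    (toSG F).deleteEdges {s(e.1, e.2)} = toSG (F.erase e) := by
  ext a b
  have h := hF e he
  have hab : (a, b) ∈ F → a < b := hF (a, b)
  have hba : (b, a) ∈ F → b < a := hF (b, a)
  simp only [SimpleGraph.deleteEdges_adj, toSG_adj, Set.mem_singleton_iff, Sym2.eq_iff,
    Finset.mem_erase]
  grind

lemma ev_mem_of_reachable {G : SimpleGraph (Fin (n + 1))} {S : Submodule ℝ (Vtype n)}
    (hS : ∀ a b, G.Adj a b → ev a b ∈ S) {u v : Fin (n + 1)} (h : G.Reachable u v) :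
    ev u v ∈ S := by
  obtain ⟨p⟩ := h
  induction p with
  | nil => simp [ev]
  | @cons a b c hab _ ih =>
    rw [show ev a c = ev a b + ev b c by simp [ev]]
    exact S.add_mem (hS a b hab) ih

lemma ev_mem_span_of_adj {a b : Fin (n + 1)} (h : (toSG F).Adj a b) :
    ev a b ∈ Submodule.span ℝ ((fun e : Edge n => ev e.1 e.2) '' F) := by
  obtain ⟨-, h | h⟩ := toSG_adj.1 h
  · exact Submodule.subset_span ⟨_, h, rfl⟩
  · rw [show ev a b = -ev b a by simp [ev]]
    exact Submodule.neg_mem _ (Submodule.subset_span ⟨_, h, rfl⟩)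

theorem IsGraph.isAcyclic_of_linearIndepOn (hF : IsGraph F)
    (h : LinearIndepOn ℝ (fun e : Edge n => ev e.1 e.2) (F : Set (Edge n))) :
    (toSG F).IsAcyclic := by
  have isBridge : ∀ e ∈ F, (toSG F).IsBridge s(e.1, e.2) := fun e he => by
    rw [SimpleGraph.isBridge_iff, hF.deleteEdges_toSG he]
    intro hreach
    have hspan := ev_mem_of_reachable (fun a b => ev_mem_span_of_adj) hreach
    rw [Finset.coe_erase] at hspan
    exact linearIndepOn_iff_notMem_span.1 h e he hspan
  rw [SimpleGraph.isAcyclic_iff_forall_adj_isBridge]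
  intro a b hab
  obtain ⟨-, h | h⟩ := toSG_adj.1 hab
  · exact isBridge _ h
  · rw [Sym2.eq_swap]
    exact isBridge _ h

lemma IsNCA.isTreeG (hF : IsNCA F) (hconn : (toSG F).Connected) : IsTreeG F :=
  ⟨hF.isGraph, hconn, hF.isGraph.isAcyclic_of_linearIndepOn hF.linearIndepOn⟩

lemma IsTreeG.card_eq (hF : IsTreeG F) : F.card = n := by
  classical
  have himage : (toSG F).edgeFinset = F.image fun e => s(e.1, e.2) := by
    ext e
    induction e with
    | h a b =>
      have hab : (a, b) ∈ F → a < b := hF.1 (a, b)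
      have hba : (b, a) ∈ F → b < a := hF.1 (b, a)
      simp only [SimpleGraph.mem_edgeFinset, SimpleGraph.mem_edgeSet, toSG_adj, Finset.mem_image,
        Sym2.eq_iff, Prod.exists]
      grind
  have hinj : Set.InjOn (fun e : Edge n => s(e.1, e.2)) F := by
    intro e he f hf hef
    have := hF.1 e he
    have := hF.1 f hf
    rw [Sym2.eq_iff] at hef
    grind
  have hcard := hF.2.card_edgeFinset
  rw [himage, Finset.card_image_of_injOn hinj, Fintype.card_fin] at hcard
  exact Nat.succ_injective hcard

lemma sum_netFlow (c : Edge n → ℝ) (W : Finset (Fin (n + 1))) :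
    ∑ v ∈ W, netFlow c v =
      ∑ e : Edge n, c e * ((if e.1 ∈ W then 1 else 0) - if e.2 ∈ W then 1 else 0) := by
  simp only [netFlow, Fintype.linearCombination_apply, Finset.sum_apply, Pi.smul_apply, smul_eq_mul]
  rw [Finset.sum_comm]
  refine Finset.sum_congr rfl fun e _ => ?_
  rw [← Finset.mul_sum]
  simp [ev, Pi.single_apply]

lemma IsTreeG.exists_apply_eq_sum_netFlow (hF : IsTreeG F) {e : Edge n} (he : e ∈ F) :
    ∃ W : Finset (Fin (n + 1)), ∀ c, (∀ f ∉ F, c f = 0) → c e = ∑ v ∈ W, netFlow c v := by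
  classical
  set G := toSG (F.erase e) with hG
  have hsep : ¬ G.Reachable e.1 e.2 := by
    rw [hG, ← hF.1.deleteEdges_toSG he]
    exact SimpleGraph.isAcyclic_iff_forall_adj_isBridge.1 hF.2.isAcyclic (hF.1.adj he)
  refine ⟨Finset.univ.filter (G.Reachable e.1), fun c hc => ?_⟩
  rw [sum_netFlow, Finset.sum_eq_single e]
  · simp [hsep]
  · intro f _ hfe
    by_cases hf : f ∈ F
    · have hadj : G.Adj f.1 f.2 :=
        toSG_adj.2 ⟨(hF.1 f hf).ne, Or.inl (Finset.mem_erase.2 ⟨hfe, hf⟩)⟩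
      have hiff : G.Reachable e.1 f.1 ↔ G.Reachable e.1 f.2 :=
        ⟨fun h => h.trans hadj.reachable, fun h => h.trans hadj.symm.reachable⟩
      simp [hiff]
    · rw [hc f hf, zero_mul]
  · simp

/-- The points of the lattice `ℤ^{n+1}`. -/
def IsLatticePoint (x : Vtype n) : Prop := ∀ i, ∃ z : ℤ, x i = z

theorem IsTreeG.exists_nat_eq_of_isLatticePoint (hF : IsTreeG F) (hc : IsFlowOn F c)
    (hx : IsLatticePoint (netFlow c)) : ∃ d : Edge n → ℕ, c = fun e => (d e : ℝ) := by
  have hnat : ∀ e, ∃ d : ℕ, c e = d := fun e => by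
    by_cases he : e ∈ F
    · obtain ⟨W, hW⟩ := hF.exists_apply_eq_sum_netFlow he
      choose z hz using hx
      have hce : c e = ((∑ v ∈ W, z v : ℤ) : ℝ) := by
        rw [hW c hc.eq_zero, Int.cast_sum]
        exact Finset.sum_congr rfl fun v _ => hz v
      obtain ⟨d, hd⟩ := Int.eq_ofNat_of_zero_le (Int.cast_nonneg_iff.1 (hce ▸ hc.nonneg e))
      exact ⟨d, by rw [hce, hd]; norm_cast⟩
    · exact ⟨0, by simpa using hc.eq_zero e he⟩
  choose d hd using hnat
  exact ⟨d, funext hd⟩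

end Trees

section Closure

/-- There is an increasing path, possibly of length zero, from `a` to `b` in `T`. -/
def IncPath (T : EdgeSet n) : Fin (n + 1) → Fin (n + 1) → Prop :=
  Relation.ReflTransGen fun a b => a < b ∧ (a, b) ∈ T

lemma IncPath.le {a b : Fin (n + 1)} (h : IncPath T a b) : a ≤ b := by
  induction h with
  | refl => exact le_rfl
  | tail _ h ih => exact ih.trans h.1.le

lemma mem_closureT_iff {e : Edge n} : e ∈ closureT T ↔ e.1 < e.2 ∧ IncPath T e.1 e.2 := by
  refine ⟨fun h => ⟨h.1, h.2.to_reflTransGen⟩, fun ⟨hlt, hpath⟩ => ⟨hlt, ?_⟩⟩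
  exact (Relation.reflTransGen_iff_eq_or_transGen.1 hpath).resolve_left hlt.ne'

lemma IsGraph.mem_closureT (hT : IsGraph T) {e : Edge n} (he : e ∈ T) : e ∈ closureT T :=
  ⟨hT e he, .single ⟨hT e he, he⟩⟩

lemma closureT_trans {i j k : Fin (n + 1)} (hij : (i, j) ∈ closureT T) (hjk : (j, k) ∈ closureT T) :
    (i, k) ∈ closureT T :=
  ⟨hij.1.trans hjk.1, hij.2.trans hjk.2⟩

lemma IncPath.split_of_noncrossing (hnc : Noncrossing T) {i j q l : Fin (n + 1)}
    (hiq : (i, q) ∈ T) (h : IncPath T j l) (hij : i < j) (hjq : j ≤ q) (hql : q ≤ l) :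
    IncPath T j q ∧ IncPath T q l := by
  induction h using Relation.ReflTransGen.head_induction_on with
  | refl =>
    obtain rfl := le_antisymm hjq hql
    exact ⟨.refl, .refl⟩
  | @head j j' hstep hrest ih =>
    obtain rfl | hjq := hjq.eq_or_lt
    · exact ⟨.refl, .head hstep hrest⟩
    · obtain hj'q | hqj' := le_or_gt j' q
      · obtain ⟨hleft, hright⟩ := ih (hij.trans hstep.1) hj'q
        exact ⟨.head hstep hleft, hright⟩
      · exact (hnc ⟨i, j, q, j', hij, hjq, hqj', hiq, hstep.2⟩).elim

lemma IncPath.swap_of_noncrossing (hnc : Noncrossing T) {i j k l : Fin (n + 1)}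
    (hik : IncPath T i k) (hjl : IncPath T j l) (hij : i ≤ j) (hjk : j ≤ k) (hkl : k ≤ l) :
    IncPath T i l ∧ IncPath T j k := by
  induction hik using Relation.ReflTransGen.head_induction_on with
  | refl =>
    obtain rfl := le_antisymm hij hjk
    exact ⟨hjl, .refl⟩
  | @head i i' hstep hrest ih =>
    obtain rfl | hij := hij.eq_or_lt
    · exact ⟨hjl, .head hstep hrest⟩
    · obtain hi'j | hji' := le_or_gt i' j
      · obtain ⟨hil, hjk⟩ := ih hi'j
        exact ⟨.head hstep hil, hjk⟩
      · have hi'l := (show IncPath T i' k from hrest).le.trans hkl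
        obtain ⟨hji', hi'l⟩ := hjl.split_of_noncrossing hnc hstep.2 hij hji'.le hi'l
        exact ⟨.head hstep hi'l, hji'.trans hrest⟩

lemma Crosses.swap_mem_closureT (hnc : Noncrossing T) {e f : Edge n} (h : Crosses e f)
    (he : e ∈ closureT T) (hf : f ∈ closureT T) : (e.1, f.2) ∈ closureT T := by
  rw [mem_closureT_iff] at *
  obtain ⟨h₁, h₂, h₃⟩ | ⟨h₁, h₂, h₃⟩ := h
  · exact ⟨h₁.trans (h₂.trans h₃), (he.2.swap_of_noncrossing hnc hf.2 h₁.le h₂.le h₃.le).1⟩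
  · exact ⟨h₂, (hf.2.swap_of_noncrossing hnc he.2 h₁.le h₂.le h₃.le).2⟩

end Closure

section NormalForm

/-- A strictly concave function of the length of an edge. Resolving a conflict, by merging two
consecutive edges or by uncrossing two crossing ones, decreases the total weight. -/
def edgeWeight (e : Edge n) : ℤ := (e.2 - e.1) * (n + 1 - (e.2 - e.1))

lemma edgeWeight_nonneg {e : Edge n} (he : e.1 < e.2) : 0 ≤ edgeWeight e :=
  mul_nonneg (by grind) (by have := e.2.isLt; grind)

lemma edgeWeight_trans_lt {i j k : Fin (n + 1)} (hij : i < j) (hjk : j < k) :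
    edgeWeight (i, k) < edgeWeight (i, j) + edgeWeight (j, k) := by
  have h : (0 : ℤ) < (j - i) * (k - j) := mul_pos (by grind) (by grind)
  simp only [edgeWeight]
  linarith

lemma Crosses.edgeWeight_swap_lt {e f : Edge n} (h : Crosses e f) :
    edgeWeight (e.1, f.2) + edgeWeight (f.1, e.2) < edgeWeight e + edgeWeight f := by
  have hpos : (0 : ℤ) < (f.1 - e.1) * (f.2 - e.2) := by
    obtain ⟨h₁, -, h₃⟩ | ⟨h₁, -, h₃⟩ := h
    · exact mul_pos (by grind) (by grind)
    · exact mul_pos_of_neg_of_neg (by grind) (by grind)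
  simp only [edgeWeight]
  linarith

/-- `m` is a multiset of edges of the transitive closure of `T` whose roots add up to `x`. -/
def IsDecomposition (T : EdgeSet n) (x : Vtype n) (m : Multiset (Edge n)) : Prop :=
  (∀ e ∈ m, e ∈ closureT T) ∧ (m.map fun e => ev e.1 e.2).sum = x

lemma IsDecomposition.edgeWeight_le_of_replace {m : Multiset (Edge n)}
    (hm : IsDecomposition T x m) (hmin : ∀ m', IsDecomposition T x m' →
      (m.map edgeWeight).sum ≤ (m'.map edgeWeight).sum) {e f : Edge n} (he : e ∈ m) (hf : f ∈ m)
    (hef : e ≠ f) {s : Multiset (Edge n)} (hs : IsDecomposition T (ev e.1 e.2 + ev f.1 f.2) s) :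
    edgeWeight e + edgeWeight f ≤ (s.map edgeWeight).sum := by
  obtain ⟨m₁, rfl⟩ := Multiset.exists_cons_of_mem he
  obtain ⟨m₂, rfl⟩ :=
    Multiset.exists_cons_of_mem ((Multiset.mem_cons.1 hf).resolve_left hef.symm)
  have h := hmin (s + m₂) ⟨fun g hg => ?_, ?_⟩
  · simp only [Multiset.map_cons, Multiset.sum_cons, Multiset.map_add, Multiset.sum_add] at h
    linarith
  · exact (Multiset.mem_add.1 hg).elim (hs.1 g) fun hg => hm.1 g (by simp [hg])
  · rw [Multiset.map_add, Multiset.sum_add, hs.2, ← hm.2]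
    simp [add_assoc]

lemma IsDecomposition.isNCA_of_minimal (hnc : Noncrossing T) {m : Multiset (Edge n)}
    (hm : IsDecomposition T x m) (hmin : ∀ m', IsDecomposition T x m' →
      (m.map edgeWeight).sum ≤ (m'.map edgeWeight).sum) : IsNCA m.toFinset := by
  have replace_le := fun {e f : Edge n} => hm.edgeWeight_le_of_replace hmin (e := e) (f := f)
  simp only [← Multiset.mem_toFinset] at replace_le
  have hmem : ∀ e ∈ m.toFinset, e ∈ closureT T := fun e he => hm.1 e (Multiset.mem_toFinset.1 he)
  refine ⟨fun e he => (hmem e he).1, fun e he f hf hef => ?_, ?_⟩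
  · have hswap : IsDecomposition T (ev e.1 e.2 + ev f.1 f.2) {(e.1, f.2), (f.1, e.2)} :=
      ⟨by simpa using ⟨hef.swap_mem_closureT hnc (hmem e he) (hmem f hf),
        hef.symm.swap_mem_closureT hnc (hmem f hf) (hmem e he)⟩, by simp [ev]; abel⟩
    refine hef.edgeWeight_swap_lt.not_ge ?_
    simpa using replace_le he hf (by rintro rfl; simp [Crosses] at hef) hswap
  · rintro ⟨i, j⟩ hij ⟨_, k⟩ hjk rfl
    have hij_lt : i < j := (hmem _ hij).1
    have hmerge : IsDecomposition T (ev i j + ev j k) {(i, k)} :=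
      ⟨by simpa using closureT_trans (hmem _ hij) (hmem _ hjk), by simp [ev]⟩
    refine (edgeWeight_trans_lt hij_lt (hmem _ hjk).1).not_ge ?_
    simpa using replace_le hij hjk (by simp [hij_lt.ne]) hmerge

theorem IsDecomposition.exists_isNCA (hnc : Noncrossing T) {m : Multiset (Edge n)}
    (hm : IsDecomposition T x m) : ∃ m', IsDecomposition T x m' ∧ IsNCA m'.toFinset := by
  obtain ⟨_, ⟨m', hm', rfl⟩, hmin⟩ := Int.exists_least_of_bdd
    (P := fun w => ∃ m, IsDecomposition T x m ∧ (m.map edgeWeight).sum = w)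
    ⟨0, fun w ⟨m, hm, hw⟩ => hw ▸ Multiset.sum_nonneg fun z hz => by
      obtain ⟨e, he, rfl⟩ := Multiset.mem_map.1 hz
      exact edgeWeight_nonneg (hm.1 e he).1⟩
    ⟨_, m, hm, rfl⟩
  exact ⟨m', hm', hm'.isNCA_of_minimal hnc fun m'' hm'' => hmin _ ⟨m'', hm'', rfl⟩⟩

lemma IsGraph.exists_isDecomposition (hT : IsGraph T) {d : Edge n → ℕ}
    (hd : IsFlowOn T fun e => (d e : ℝ)) :
    ∃ m, IsDecomposition T (netFlow fun e => (d e : ℝ)) m := by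
  refine ⟨∑ e ∈ T, d e • {e}, fun e he => ?_, ?_⟩
  · obtain ⟨f, hf, hef⟩ := Multiset.mem_sum.1 he
    obtain rfl := Multiset.mem_singleton.1 (Multiset.mem_of_mem_nsmul hef)
    exact hT.mem_closureT hf
  · have hsum := map_sum (Multiset.sumAddMonoidHom.comp
      (Multiset.mapAddMonoidHom fun e : Edge n => ev e.1 e.2)) (fun e => d e • {e}) T
    simp only [AddMonoidHom.comp_apply, map_nsmul, Multiset.coe_mapAddMonoidHom,
      Multiset.coe_sumAddMonoidHom, Multiset.map_singleton, Multiset.sum_singleton] at hsum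
    rw [hsum, netFlow_eq_sum_of_eq_zero hd.eq_zero]
    simp only [Nat.cast_smul_eq_nsmul]

lemma isFlowOn_count (m : Multiset (Edge n)) : IsFlowOn m.toFinset fun e => (m.count e : ℝ) :=
  ⟨fun e => Nat.cast_nonneg _, fun e he => by simpa using he⟩

lemma netFlow_count (m : Multiset (Edge n)) :
    netFlow (fun e => (m.count e : ℝ)) = (m.map fun e => ev e.1 e.2).sum := by
  rw [netFlow_eq_sum_of_eq_zero (isFlowOn_count m).eq_zero, Finset.sum_multiset_map_count]
  simp only [Nat.cast_smul_eq_nsmul]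

end NormalForm

section Extension

protected lemma IsNCA.insert (hF : IsNCA F) {e : Edge n} (he : e.1 < e.2)
    (hcross : ∀ f ∈ F, ¬ Crosses f e) (hsource : ∀ f ∈ F, f.2 ≠ e.1) (hsink : ∀ f ∈ F, e.2 ≠ f.1) :
    IsNCA (insert e F) := by
  refine ⟨?_, ?_, ?_⟩ <;> simp only [IsGraph, Finset.forall_mem_insert]
  · exact ⟨he, hF.isGraph⟩
  · exact ⟨⟨by simp [Crosses], fun g hg h => hcross g hg h.symm⟩,
      fun f hf => ⟨hcross f hf, hF.not_crosses f hf⟩⟩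
  · exact ⟨⟨he.ne', hsink⟩, fun f hf => ⟨hsource f hf, hF.snd_ne_fst f hf⟩⟩

lemma Crosses.of_swap {e f g : Edge n} (h : Crosses e f) (hg : Crosses g (f.1, e.2)) :
    Crosses g e ∨ Crosses g f := by
  simp only [Crosses] at *
  grind

lemma exists_adj_not_reachable {V : Type*} {G H : SimpleGraph V} (hG : G.Connected)
    (hH : ¬ H.Connected) : ∃ a b, G.Adj a b ∧ ¬ H.Reachable a b := by
  have := hG.nonempty
  obtain ⟨u, v, huv⟩ : ∃ u v, ¬ H.Reachable u v := by
    by_contra! hreach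
    exact hH ⟨hreach⟩
  obtain ⟨p⟩ := hG.preconnected u v
  obtain ⟨d, -, hd₁, hd₂⟩ := p.exists_boundary_dart {w | H.Reachable u w} (.refl u) huv
  exact ⟨d.fst, d.snd, d.adj, fun h => hd₂ (hd₁.trans h)⟩

/-- The edges of the transitive closure of `T` that join two components of `F` and can be added to
`F` without violating the alternation condition. -/
def IsJoiningEdge (T F : EdgeSet n) (e : Edge n) : Prop :=
  e ∈ closureT T ∧ ¬ (toSG F).Reachable e.1 e.2 ∧ (∀ f ∈ F, f.2 ≠ e.1) ∧ ∀ f ∈ F, e.2 ≠ f.1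

/- The longest edge of the closure that joins two components works: an edge of `F` adjacent to it
at an end could be used to prolong it. -/
lemma IsTreeG.exists_isJoiningEdge (hT : IsTreeG T) (hF : IsGraph F)
    (hFT : ∀ e ∈ F, e ∈ closureT T) (hconn : ¬ (toSG F).Connected) : ∃ e, IsJoiningEdge T F e := by
  classical
  obtain ⟨a, b, hab, hsep⟩ := exists_adj_not_reachable hT.2.connected hconn
  have hne : (Finset.univ.filter fun e : Edge n =>
      e ∈ closureT T ∧ ¬ (toSG F).Reachable e.1 e.2).Nonempty := by
    obtain ⟨-, h | h⟩ := toSG_adj.1 hab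
    · exact ⟨(a, b), by simpa using ⟨hT.1.mem_closureT h, hsep⟩⟩
    · exact ⟨(b, a), by simpa using ⟨hT.1.mem_closureT h, fun h => hsep h.symm⟩⟩
  obtain ⟨⟨i, j⟩, hij, hmax⟩ := Finset.exists_max_image _ (fun e => (e.2 : ℤ) - e.1) hne
  simp only [Finset.mem_filter, Finset.mem_univ, true_and, Prod.forall] at hij hmax
  refine ⟨(i, j), hij.1, hij.2, ?_, ?_⟩
  · rintro ⟨x, _⟩ hx rfl
    have hlt := hF _ hx
    have hle := hmax x j ⟨closureT_trans (hFT _ hx) hij.1,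
      fun h => hij.2 ((hF.adj hx).symm.reachable.trans h)⟩
    grind
  · rintro ⟨_, y⟩ hy rfl
    have hlt := hF _ hy
    have hle := hmax i y ⟨closureT_trans hij.1 (hFT _ hy),
      fun h => hij.2 (h.trans (hF.adj hy).symm.reachable)⟩
    grind

lemma IsJoiningEdge.swap (hnc : Noncrossing T) (hF : IsNCA F) (hFT : ∀ e ∈ F, e ∈ closureT T)
    {e f : Edge n} (he : IsJoiningEdge T F e) (hf : f ∈ F) (hfe : Crosses f e) :
    IsJoiningEdge T F (f.1, e.2) ∨ IsJoiningEdge T F (e.1, f.2) := by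
  obtain ⟨heT, hsep, hsource, hsink⟩ := he
  by_cases h : (toSG F).Reachable f.1 e.2
  · refine Or.inr ⟨hfe.symm.swap_mem_closureT hnc heT (hFT f hf), fun h' => hsep ?_, hsource,
      hF.snd_ne_fst f hf⟩
    exact h'.trans ((hF.isGraph.adj hf).symm.reachable.trans h)
  · exact Or.inl ⟨hfe.swap_mem_closureT hnc (hFT f hf) heT, h,
      fun g hg => hF.snd_ne_fst g hg f hf, hsink⟩

open Classical in
lemma IsNCA.card_crosses_swap_lt (hF : IsNCA F) {e f e' : Edge n} (hf : f ∈ F) (hfe : Crosses f e)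
    (he' : e' = (f.1, e.2) ∨ e' = (e.1, f.2)) :
    (F.filter (Crosses · e')).card < (F.filter (Crosses · e)).card := by
  refine Finset.card_lt_card
    (Finset.ssubset_iff_of_subset ?_ |>.2 ⟨f, Finset.mem_filter.2 ⟨hf, hfe⟩, fun h => ?_⟩)
  · refine Finset.monotone_filter_right _ fun g hg hge' => ?_
    have hgf := hF.not_crosses g hg f hf
    rcases he' with rfl | rfl
    · exact (hfe.symm.of_swap hge').resolve_right hgf
    · exact (hfe.of_swap hge').resolve_left hgf
  · have hcross := (Finset.mem_filter.1 h).2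
    obtain rfl | rfl := he' <;> simp [Crosses] at hcross

/- Among the joining edges take one with the fewest crossings with `F`: at a crossing, one of the
two uncrossed edges would be a joining edge with fewer crossings. -/
lemma IsNCA.exists_insert (hF : IsNCA F) (hT : IsTreeG T) (hnc : Noncrossing T)
    (hFT : ∀ e ∈ F, e ∈ closureT T) (hconn : ¬ (toSG F).Connected) :
    ∃ e ∉ F, e ∈ closureT T ∧ IsNCA (insert e F) := by
  classical
  obtain ⟨e₀, he₀⟩ := hT.exists_isJoiningEdge hF.isGraph hFT hconn
  obtain ⟨e, he, hmin⟩ := Finset.exists_min_image (Finset.univ.filter (IsJoiningEdge T F))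
    (fun e => (F.filter (Crosses · e)).card) ⟨e₀, by simpa using he₀⟩
  simp only [Finset.mem_filter, Finset.mem_univ, true_and] at he hmin
  refine ⟨e, fun h => he.2.1 (hF.isGraph.adj h).reachable, he.1,
    hF.insert he.1.1 (fun f hf hfe => ?_) he.2.2.1 he.2.2.2⟩
  obtain h | h := he.swap hnc hF hFT hf hfe
  · exact (hF.card_crosses_swap_lt hf hfe (Or.inl rfl)).not_ge (hmin _ h)
  · exact (hF.card_crosses_swap_lt hf hfe (Or.inr rfl)).not_ge (hmin _ h)

lemma mem_NCASpanningTrees_iff :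
    F ∈ NCASpanningTrees T ↔ IsNCA F ∧ (toSG F).Connected ∧ ∀ e ∈ F, e ∈ closureT T := by
  constructor
  · rintro ⟨htree, hnc, halt, hsub⟩
    exact ⟨isNCA_iff.2 ⟨htree.1, hnc, halt⟩, htree.2.connected, hsub⟩
  · rintro ⟨hF, hconn, hsub⟩
    obtain ⟨-, hnc, halt⟩ := isNCA_iff.1 hF
    exact ⟨hF.isTreeG hconn, hnc, halt, hsub⟩

theorem IsNCA.exists_NCASpanningTrees_superset (hF : IsNCA F) (hT : IsTreeG T)
    (hnc : Noncrossing T) (hFT : ∀ e ∈ F, e ∈ closureT T) : ∃ S ∈ NCASpanningTrees T, F ⊆ S := by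
  obtain ⟨S, hFS, hS⟩ := (Set.toFinite {S : EdgeSet n | IsNCA S ∧ ∀ e ∈ S, e ∈ closureT T})
    |>.exists_le_maximal ⟨hF, hFT⟩
  refine ⟨S, mem_NCASpanningTrees_iff.2 ⟨hS.prop.1, ?_, hS.prop.2⟩, hFS⟩
  by_contra hconn
  obtain ⟨e, heS, heT, he⟩ := hS.prop.1.exists_insert hT hnc hS.prop.2 hconn
  refine heS (hS.le_of_ge ⟨he, ?_⟩ (Finset.subset_insert e S) (Finset.mem_insert_self e S))
  exact Finset.forall_mem_insert _ _ _ |>.2 ⟨heT, hS.prop.2⟩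

theorem IsTreeG.exists_nat_flow (hT : IsTreeG T) (hnc : Noncrossing T) (hx : x ∈ cone T)
    (hlat : IsLatticePoint x) : ∃ S ∈ NCASpanningTrees T, ∃ d : Edge n → ℕ,
      IsFlowOn S (fun e => (d e : ℝ)) ∧ netFlow (fun e => (d e : ℝ)) = x := by
  obtain ⟨c, hc, rfl⟩ := mem_cone_iff.1 hx
  obtain ⟨d, rfl⟩ := hT.exists_nat_eq_of_isLatticePoint hc hlat
  obtain ⟨m, hm⟩ := hT.1.exists_isDecomposition hc
  obtain ⟨m', hm', hNCA⟩ := hm.exists_isNCA hnc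
  obtain ⟨S, hS, hsub⟩ := hNCA.exists_NCASpanningTrees_superset hT hnc
    fun e he => hm'.1 e (Multiset.mem_toFinset.1 he)
  exact ⟨S, hS, m'.count, (isFlowOn_count m').mono hsub, (netFlow_count m').trans hm'.2⟩

end Extension

section Exchange

variable {A B : EdgeSet n}

lemma exists_mem_cut_of_connected (hB : (toSG B).Connected)
    {W : Set (Fin (n + 1))} {u v : Fin (n + 1)} (hu : u ∈ W) (hv : v ∉ W) :
    ∃ x y, (x, y) ∈ B ∧ (x ∈ W ∧ y ∉ W ∨ x ∉ W ∧ y ∈ W) := by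
  obtain ⟨p⟩ := hB.preconnected u v
  obtain ⟨d, -, hd₁, hd₂⟩ := p.exists_boundary_dart W hu hv
  obtain ⟨-, h | h⟩ := toSG_adj.1 d.adj
  exacts [⟨_, _, h, Or.inl ⟨hd₁, hd₂⟩⟩, ⟨_, _, h, Or.inr ⟨hd₂, hd₁⟩⟩]

/- Otherwise no edge leaves the set of vertices between the largest out-neighbour of `i` below `q`
and the smallest in-neighbour of `q` above `i`. -/
lemma IsNCA.exists_in_neighbor (hB : IsNCA B) (hconn : (toSG B).Connected)
    {i j q : Fin (n + 1)} (hiq : (i, q) ∈ B) (hij : i < j) (hjq : j < q)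
    (hout : ∀ y, (i, y) ∈ B → y < q → y < j) : ∃ p, i < p ∧ p ≤ j ∧ (p, q) ∈ B := by
  by_contra! hin
  obtain ⟨x, y, hxy, h⟩ := exists_mem_cut_of_connected hconn
    (W := {v | i < v ∧ v < q ∧ (∀ y, (i, y) ∈ B → y < q → y < v) ∧
      ∀ x, (x, q) ∈ B → i < x → v < x}) (u := j) (v := i) (by grind) (by simp)
  have hlt := hB.isGraph _ hxy
  have hcross := hB.not_crosses _ hxy
  have hadj := hB.snd_ne_fst _ hxy
  have hadj' := fun f hf => hB.snd_ne_fst f hf _ hxy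
  simp only [Crosses] at hcross
  grind

/- Otherwise no edge leaves the interval from `i` to its largest out-neighbour. -/
lemma IsNCA.exists_out_neighbor (hB : IsNCA B) (hconn : (toSG B).Connected)
    {i j : Fin (n + 1)} (hij : i < j) (hijB : (i, j) ∉ B)
    (hover : ∀ x y, (x, y) ∈ B → x < i → i ≤ y → ¬ y < j) : ∃ q, j < q ∧ (i, q) ∈ B := by
  by_contra! hout
  obtain ⟨x, y, hxy, h⟩ := exists_mem_cut_of_connected hconn
    (W := {v | i ≤ v ∧ (v = i ∨ ∃ y, (i, y) ∈ B ∧ v ≤ y)}) (u := i) (v := j) (by simp) (by grind)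
  have hlt := hB.isGraph _ hxy
  have hcross := hB.not_crosses _ hxy
  have hadj := fun f hf => hB.snd_ne_fst f hf _ hxy
  simp only [Crosses] at hcross
  grind

/-- The data of a flip in `B`: `a < p` are consecutive in-neighbours of `q`, and `c` is the largest
out-neighbour of `p` below `q`, or `p` itself. The flip replaces the edge `(p, q)` by `(a, c)`. -/
structure IsFlip (B : EdgeSet n) (a p c q : Fin (n + 1)) : Prop where
  mem : (p, q) ∈ B
  isGreatest_in : IsGreatest {x | x < p ∧ (x, q) ∈ B} a
  isGreatest_out : IsGreatest (insert p {y | y < q ∧ (p, y) ∈ B}) c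

namespace IsFlip

variable {a p c q : Fin (n + 1)}

lemma le_out (h : IsFlip B a p c q) : p ≤ c := h.isGreatest_out.2 (Set.mem_insert p _)

lemma lt_out (h : IsFlip B a p c q) : a < c := h.isGreatest_in.1.1.trans_le h.le_out

lemma out_eq_or_mem (h : IsFlip B a p c q) : c = p ∨ (p, c) ∈ B :=
  h.isGreatest_out.1.imp_right And.right

lemma out_lt (h : IsFlip B a p c q) (hB : IsGraph B) : c < q := by
  obtain rfl | hc := h.isGreatest_out.1
  exacts [hB _ h.mem, hc.1]

lemma not_crosses (h : IsFlip B a p c q) (hB : IsNCA B) {x y : Fin (n + 1)} (hxy : (x, y) ∈ B)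
    (hne : (x, y) ≠ (p, q)) : ¬ Crosses (x, y) (a, c) := by
  have hap := h.isGreatest_in.1.1
  have hcq := h.out_lt hB.isGraph
  have hpc := h.le_out
  have hin : x < p → y = q → x ≤ a := fun hx hy => h.isGreatest_in.2 ⟨hx, hy ▸ hxy⟩
  have hout : x = p → y < q → y ≤ c := fun hx hy => h.isGreatest_out.2 (Or.inr ⟨hy, hx ▸ hxy⟩)
  have hc := h.out_eq_or_mem.imp_right (hB.not_crosses _ hxy _)
  have haq := hB.not_crosses _ hxy _ h.isGreatest_in.1.2
  have hpq := hB.not_crosses _ hxy _ h.mem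
  simp only [Crosses] at *
  grind

lemma isNCA (h : IsFlip B a p c q) (hB : IsNCA B) :
    IsNCA (insert (a, c) (B.erase (p, q))) := by
  have hcq := h.out_lt hB.isGraph
  refine (hB.mono (B.erase_subset (p, q))).insert h.lt_out (fun f hf => ?_) (fun f hf => ?_)
    fun f hf hcf => ?_ <;> obtain ⟨hne, hfB⟩ := Finset.mem_erase.1 hf
  · exact h.not_crosses hB hfB hne
  · exact hB.snd_ne_fst f hfB (a, q) h.isGreatest_in.1.2
  · obtain ⟨_, z⟩ := f
    obtain rfl : c = _ := hcf
    obtain rfl | hpc := h.out_eq_or_mem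
    · have hcz := hB.isGraph _ hfB
      obtain hzq | rfl | hqz := lt_trichotomy z q
      · exact (h.isGreatest_out.2 (Or.inr ⟨hzq, hfB⟩)).not_gt hcz
      · exact hne rfl
      · exact hB.not_crosses _ h.isGreatest_in.1.2 _ hfB (Or.inl ⟨h.lt_out, hcq, hqz⟩)
    · exact hB.snd_ne_fst _ hpc _ hfB rfl

lemma not_mem (h : IsFlip B a p c q) (hB : IsNCA B) : (a, c) ∉ B := fun hac => by
  obtain rfl | hpc := h.isGreatest_out.1
  · exact hB.snd_ne_fst _ hac _ h.mem rfl
  · obtain rfl | hlt := h.le_out.eq_or_lt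
    · exact hB.snd_ne_fst _ hac _ h.mem rfl
    · exact hB.not_crosses _ hac _ h.mem (Or.inl ⟨h.isGreatest_in.1.1, hlt, hpc.1⟩)

lemma mem_closureT (h : IsFlip B a p c q) (hnc : Noncrossing T) (hB : ∀ e ∈ B, e ∈ closureT T)
    {i j : Fin (n + 1)} (hpath : IncPath T i j) (hia : i ≤ a) (hpj : p ≤ j) (hjc : j ≤ c)
    (hcq : c ≤ q) : (a, c) ∈ closureT T := by
  have hap := h.isGreatest_in.1.1.le
  have haq := (mem_closureT_iff.1 (hB _ h.isGreatest_in.1.2)).2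
  have haj := (hpath.swap_of_noncrossing hnc haq hia (hap.trans hpj) (hjc.trans hcq)).2
  have hpc : IncPath T p c := by
    obtain hcp | hpc := h.out_eq_or_mem
    exacts [hcp ▸ .refl, (mem_closureT_iff.1 (hB _ hpc)).2]
  exact mem_closureT_iff.2 ⟨h.lt_out, (haj.swap_of_noncrossing hnc hpc hap hpj hjc).1⟩

lemma treeLexLT_insert_erase (h : IsFlip B a p c q) (hB : IsNCA B) :
    treeLexLT (insert (a, c) (B.erase (p, q))) B := by
  refine ⟨(a, c), Finset.mem_insert_self _ _, h.not_mem hB, fun f hf => ?_⟩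
  obtain rfl | rfl : f = (a, c) ∨ f = (p, q) := by grind
  exacts [Or.inr ⟨rfl, le_rfl⟩, Or.inl h.isGreatest_in.1.1]

end IsFlip

/- Take for `q` the first out-neighbour of `i` beyond `j`, and for `p` the last in-neighbour of `q`
that is at most `j`. -/
lemma IsNCA.exists_isFlip (hB : IsNCA B) (hconn : (toSG B).Connected)
    {i j : Fin (n + 1)} (hij : i < j) (hijB : (i, j) ∉ B)
    (hover : ∀ x y, (x, y) ∈ B → x < i → i ≤ y → ¬ y < j) :
    ∃ a p c q, IsFlip B a p c q ∧ i ≤ a ∧ p ≤ j ∧ j ≤ c := by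
  obtain ⟨q, ⟨hjq, hiq⟩, hqmin⟩ := (Set.toFinite {q | j < q ∧ (i, q) ∈ B}).bddBelow
    |>.exists_isLeast_of_nonempty (hB.exists_out_neighbor hconn hij hijB hover)
  obtain ⟨p₀, hip₀, hp₀⟩ := hB.exists_in_neighbor hconn hiq hij hjq fun y hiy hyq => by
    by_contra! hjy
    exact (hqmin ⟨lt_of_le_of_ne hjy fun h => hijB (h ▸ hiy), hiy⟩).not_gt hyq
  obtain ⟨p, ⟨hpj, hpq⟩, hpmax⟩ := (Set.toFinite {p | p ≤ j ∧ (p, q) ∈ B}).bddAbove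
    |>.exists_isGreatest_of_nonempty ⟨p₀, hp₀⟩
  obtain ⟨a, ha⟩ := (Set.toFinite {x | x < p ∧ (x, q) ∈ B}).bddAbove
    |>.exists_isGreatest_of_nonempty ⟨i, hip₀.trans_le (hpmax hp₀), hiq⟩
  obtain ⟨c, hc⟩ := (Set.toFinite (insert p {y | y < q ∧ (p, y) ∈ B})).bddAbove
    |>.exists_isGreatest_of_nonempty (Set.insert_nonempty _ _)
  refine ⟨a, p, c, q, ⟨hpq, ha, hc⟩, ha.2 ⟨hip₀.trans_le (hpmax hp₀), hiq⟩, hpj, ?_⟩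
  by_contra! hcj
  have hpc : p ≤ c := hc.2 (Set.mem_insert p _)
  obtain ⟨p', hpp', hp'⟩ := hB.exists_in_neighbor hconn hpq (hpc.trans_lt hcj) hjq
    fun y hpy hyq => (hc.2 (Or.inr ⟨hyq, hpy⟩)).trans_lt hcj
  exact (hpmax hp').not_gt hpp'

theorem exists_exchange (hT : IsTreeG T) (hnc : Noncrossing T)
    (hA : A ∈ NCASpanningTrees T) (hB : B ∈ NCASpanningTrees T) (h : treeLexLT A B) :
    ∃ e ∈ B, e ∉ A ∧ ∃ C ∈ NCASpanningTrees T, B.erase e ⊆ C ∧ treeLexLT C B := by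
  obtain ⟨hA', -, hAT⟩ := mem_NCASpanningTrees_iff.1 hA
  obtain ⟨hB', hconn, hBT⟩ := mem_NCASpanningTrees_iff.1 hB
  obtain ⟨⟨i, j⟩, hijA, hijB, hmin⟩ := h
  have hij := hA'.isGraph _ hijA
  obtain ⟨a, p, c, q, hflip, hia, hpj, hjc⟩ := hB'.exists_isFlip hconn hij hijB
    fun x y hxy hxi hiy hyj => by
      have hxyA : (x, y) ∈ A := by
        by_contra hxyA
        have := hmin (x, y) (by grind)
        simp only [edgeLE] at this
        grind
      obtain rfl | hiy := hiy.eq_or_lt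
      · exact hA'.snd_ne_fst _ hxyA _ hijA rfl
      · exact hA'.not_crosses _ hxyA _ hijA (Or.inl ⟨hxi, hiy, hyj⟩)
  have hcq := hflip.out_lt hB'.isGraph
  refine ⟨(p, q), hflip.mem, fun hpqA => ?_, ?_⟩
  · obtain rfl | hpj := hpj.eq_or_lt
    · exact hA'.snd_ne_fst _ hijA _ hpqA rfl
    · exact hA'.not_crosses _ hijA _ hpqA
        (Or.inl ⟨hia.trans_lt hflip.isGreatest_in.1.1, hpj, hjc.trans_lt hcq⟩)
  · have hac := hflip.mem_closureT hnc hBT (mem_closureT_iff.1 (hAT _ hijA)).2 hia hpj hjc hcq.le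
    obtain ⟨C, hC, hsub⟩ := (hflip.isNCA hB').exists_NCASpanningTrees_superset hT hnc
      ((Finset.forall_mem_insert _ _ _).2 ⟨hac, fun e he => hBT e (Finset.mem_of_mem_erase he)⟩)
    refine ⟨C, hC, (Finset.subset_insert _ _).trans hsub, ?_⟩
    obtain rfl := Finset.eq_of_subset_of_card_le hsub (by
      rw [hC.1.card_eq, Finset.card_insert_of_notMem fun h =>
        hflip.not_mem hB' (Finset.mem_of_mem_erase h), Finset.card_erase_add_one hflip.mem,
        hB.1.card_eq])
    exact hflip.treeLexLT_insert_erase hB'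

lemma treeLexLT.asymm (h : treeLexLT A B) : ¬ treeLexLT B A := by
  rintro ⟨f, hfB, hfA, hf⟩
  obtain ⟨e, heA, heB, he⟩ := h
  have hef := he f (by grind)
  have hfe := hf e (by grind)
  have : e = f := by simp only [edgeLE] at hef hfe; grind
  exact heB (this ▸ hfB)

end Exchange

section RootPolytope

lemma convex_cone (E : EdgeSet n) : Convex ℝ (cone E) := fun _ hx _ hy _ _ ha hb _ =>
  add_mem_cone (smul_mem_cone ha hx) (smul_mem_cone hb hy)

lemma zero_mem_cone (E : EdgeSet n) : (0 : Vtype n) ∈ cone E :=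
  mem_cone_iff.2 ⟨0, ⟨le_rfl, fun _ _ => rfl⟩, map_zero netFlow⟩

lemma IsFlowOn.netFlow_mem_cone (hc : IsFlowOn F c) (hFE : ∀ e ∈ F, ev e.1 e.2 ∈ cone E) :
    netFlow c ∈ cone E := by
  rw [netFlow_eq_sum_of_eq_zero hc.eq_zero]
  exact Finset.sum_induction _ (· ∈ cone E) (fun _ _ => add_mem_cone) (zero_mem_cone E)
    fun e he => smul_mem_cone (hc.nonneg e) (hFE e he)

lemma zero_mem_rootPoly (E : EdgeSet n) : (0 : Vtype n) ∈ RootPoly E :=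
  subset_convexHull ℝ _ (Or.inl rfl)

lemma rootPoly_subset_cone (E : EdgeSet n) : RootPoly E ⊆ cone E := by
  refine convexHull_min ?_ (convex_cone E)
  rintro x (rfl | hx)
  exacts [zero_mem_cone E, hx.2]

lemma rootPoly_mono (h : F ⊆ E) : RootPoly F ⊆ RootPoly E :=
  convexHull_mono (Set.union_subset_union_right _ (Set.inter_subset_inter_right _ (cone_mono h)))

lemma ev_mem_rootPoly {e : Edge n} (he : e.1 < e.2) (hE : ev e.1 e.2 ∈ cone E) :
    ev e.1 e.2 ∈ RootPoly E :=
  subset_convexHull ℝ _ (Or.inr ⟨⟨_, _, he, rfl⟩, hE⟩)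

lemma ev_mem_cone_of_mem_closureT {e : Edge n} (he : e ∈ closureT T) : ev e.1 e.2 ∈ cone T := by
  obtain ⟨i, j⟩ := e
  obtain ⟨-, h⟩ := he
  dsimp only at h
  induction h with
  | single hstep => exact ev_mem_cone hstep.2
  | @tail j k _ hstep ih =>
    rw [show ev i k = ev i j + ev j k by simp [ev]]
    exact add_mem_cone ih (ev_mem_cone hstep.2)

lemma IsFlowOn.netFlow_mem (hc : IsFlowOn F c) (hsum : ∑ e, c e ≤ 1) {P : Set (Vtype n)}
    (hP : Convex ℝ P) (hzero : 0 ∈ P) (hF : ∀ e ∈ F, ev e.1 e.2 ∈ P) : netFlow c ∈ P := by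
  have hsplit : ∑ e ∈ F, c e = ∑ e, c e :=
    Finset.sum_subset F.subset_univ fun e _ he => hc.eq_zero e he
  have hnonneg : ∀ o ∈ Finset.insertNone F, 0 ≤ o.elim (1 - ∑ e, c e) c := by
    rintro (_ | e) -
    exacts [sub_nonneg.2 hsum, hc.nonneg e]
  have hmem : ∀ o ∈ Finset.insertNone F, o.elim 0 (fun e => ev e.1 e.2) ∈ P := by
    rintro (_ | e) he
    exacts [hzero, hF e (Finset.some_mem_insertNone.1 he)]
  have h := hP.sum_mem hnonneg (by simp [Finset.sum_insertNone, hsplit]) hmem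
  rw [netFlow_eq_sum_of_eq_zero hc.eq_zero]
  simpa [Finset.sum_insertNone] using h

lemma IsFlowOn.netFlow_mem_rootPoly (hc : IsFlowOn F c) (hF : IsGraph F)
    (hFE : ∀ e ∈ F, ev e.1 e.2 ∈ cone E) (hsum : ∑ e, c e ≤ 1) : netFlow c ∈ RootPoly E :=
  hc.netFlow_mem hsum (convex_convexHull ℝ _) (zero_mem_rootPoly E) fun e he =>
    ev_mem_rootPoly (hF e he) (hFE e he)

lemma exists_smul_mem_rootPoly (hE : IsGraph E) (hx : x ∈ cone E) :
    ∃ a : ℝ, 0 < a ∧ a • x ∈ RootPoly E := by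
  obtain ⟨c, hc, rfl⟩ := mem_cone_iff.1 hx
  have hsum : 0 ≤ ∑ e, c e := Finset.sum_nonneg fun e _ => hc.nonneg e
  refine ⟨(1 + ∑ e, c e)⁻¹, by positivity, ?_⟩
  rw [← map_smul]
  refine (hc.smul (by positivity)).netFlow_mem_rootPoly hE (fun e he => ev_mem_cone he) ?_
  simp only [Pi.smul_apply, smul_eq_mul, ← Finset.mul_sum]
  exact inv_mul_le_one_of_le₀ (by linarith) (by positivity)

lemma posSum_smul {a : ℝ} (ha : 0 ≤ a) (x : Vtype n) : posSum (a • x) = a * posSum x := by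
  rw [posSum, posSum, Finset.mul_sum]
  exact Finset.sum_congr rfl fun v _ => by
    simp [posPart_def, mul_max_of_nonneg _ _ ha]

lemma posSum_add_le (x y : Vtype n) : posSum (x + y) ≤ posSum x + posSum y := by
  rw [posSum, posSum, posSum, ← Finset.sum_add_distrib]
  exact Finset.sum_le_sum fun v _ => 
    max_le (add_le_add (le_posPart _) (le_posPart _))
      (add_nonneg (posPart_nonneg _) (posPart_nonneg _))

lemma posSum_le_one_of_mem_rootPoly (hx : x ∈ RootPoly E) : posSum x ≤ 1 := by
  refine convexHull_min (t := {x : Vtype n | posSum x ≤ 1}) ?_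
    (fun x hx y hy a b ha hb hab => ?_) hx
  · rintro _ (rfl | ⟨⟨i, j, -, rfl⟩, -⟩)
    · simp [posSum]
    · calc posSum (ev i j) ≤ ∑ v, if v = i then (1 : ℝ) else 0 := Finset.sum_le_sum fun v _ => by
            simp only [ev, Pi.sub_apply, Pi.single_apply, posPart_def]
            split_ifs <;> norm_num
        _ = 1 := Fintype.sum_ite_eq' i _
  · calc posSum (a • x + b • y) ≤ a * posSum x + b * posSum y := by
          simpa only [posSum_smul ha, posSum_smul hb] using posSum_add_le (a • x) (b • y)
      _ ≤ a * 1 + b * 1 := by gcongr; exacts [hx, hy]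
      _ = 1 := by rw [mul_one, mul_one, hab]

theorem mem_dilate_rootPoly_iff (hT : IsTreeG T) (hnc : Noncrossing T) (hlat : IsLatticePoint x)
    {t : ℕ} : x ∈ dilate t (RootPoly T) ↔ x ∈ cone T ∧ posSum x ≤ t := by
  constructor
  · rintro ⟨y, hy, rfl⟩
    refine ⟨smul_mem_cone t.cast_nonneg (rootPoly_subset_cone T hy), ?_⟩
    rw [posSum_smul t.cast_nonneg]
    exact mul_le_of_le_one_right t.cast_nonneg (posSum_le_one_of_mem_rootPoly hy)
  · rintro ⟨hx, hle⟩
    obtain ⟨S, hS, d, hd, rfl⟩ := hT.exists_nat_flow hnc hx hlat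
    obtain ⟨hS', -, hST⟩ := mem_NCASpanningTrees_iff.1 hS
    rw [← hS'.sum_eq_posSum hd] at hle
    refine ⟨netFlow ((t : ℝ)⁻¹ • fun e => (d e : ℝ)), ?_, ?_⟩
    · refine (hd.smul (by positivity)).netFlow_mem_rootPoly hS'.isGraph
        (fun e he => ev_mem_cone_of_mem_closureT (hST e he)) ?_
      simp only [Pi.smul_apply, smul_eq_mul, ← Finset.mul_sum]
      exact inv_mul_le_one_of_le₀ hle t.cast_nonneg
    · obtain rfl | ht := t.eq_zero_or_pos
      · have hd_zero : (fun e => (d e : ℝ)) = 0 := by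
          rw [Nat.cast_zero] at hle
          exact (Fintype.sum_eq_zero_iff_of_nonneg hd.nonneg).1
            (hle.antisymm (Finset.sum_nonneg fun e _ => hd.nonneg e))
        simp [hd_zero]
      · dsimp only
        rw [map_smul, smul_inv_smul₀ (Nat.cast_ne_zero.2 ht.ne')]

end RootPolytope

section Shelling

variable {ι : Type*} [LinearOrder ι] {Fs Rs : ι → EdgeSet n}

/-- `Rs` is the restriction map of a shelling of the simplicial cones `cone (Fs m)`, taken in the
order of `ι`: the facet opposite to `e` is covered by the earlier cones for every `e ∈ Rs m`, and
no earlier graph contains all of `Rs m`. -/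
structure IsShellingRestriction (Fs Rs : ι → EdgeSet n) : Prop where
  subset : ∀ m, Rs m ⊆ Fs m
  exists_notMem : ∀ l m, l < m → ∃ e ∈ Rs m, e ∉ Fs l
  cone_erase_subset : ∀ m, ∀ e ∈ Rs m, cone ((Fs m).erase e) ⊆ ⋃ l < m, cone (Fs l)

namespace IsShellingRestriction

lemma eq_of_netFlow_eq (h : IsShellingRestriction Fs Rs) (hF : ∀ m, IsNCA (Fs m)) {l m : ι}
    (hc : IsFlowOn (Fs l) c) (hc' : IsFlowOn (Fs m) c') (hpos : ∀ e ∈ Rs l, c e ≠ 0)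
    (hpos' : ∀ e ∈ Rs m, c' e ≠ 0) (heq : netFlow c = netFlow c') : l = m := by
  obtain rfl := (hF l).flow_unique (hF m) hc hc' heq
  refine le_antisymm (not_lt.1 fun hlt => ?_) (not_lt.1 fun hlt => ?_)
  · obtain ⟨e, he, hem⟩ := h.exists_notMem _ _ hlt
    exact hpos e he (hc'.eq_zero e hem)
  · obtain ⟨e, he, hel⟩ := h.exists_notMem _ _ hlt
    exact hpos' e he (hc.eq_zero e hel)

lemma exists_flow_ne_zero [WellFoundedLT ι] (h : IsShellingRestriction Fs Rs) {m : ι}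
    (hx : x ∈ cone (Fs m)) :
    ∃ l c, IsFlowOn (Fs l) c ∧ (∀ e ∈ Rs l, c e ≠ 0) ∧ netFlow c = x := by
  induction m using WellFoundedLT.induction with
  | _ m ih =>
    obtain ⟨c, hc, rfl⟩ := mem_cone_iff.1 hx
    by_cases hpos : ∀ e ∈ Rs m, c e ≠ 0
    · exact ⟨m, c, hc, hpos, rfl⟩
    · push Not at hpos
      obtain ⟨e, he, hce⟩ := hpos
      have hcover := h.cone_erase_subset m e he (mem_cone_iff.2 ⟨c, hc.erase hce, rfl⟩)
      simp only [Set.mem_iUnion] at hcover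
      obtain ⟨l, hlm, hl⟩ := hcover
      exact ih l hlm hl

end IsShellingRestriction

theorem isShellingRestriction_of_treeLexLT (hT : IsTreeG T) (hnc : Noncrossing T)
    (hmem : ∀ m, Fs m ∈ NCASpanningTrees T) (hsurj : ∀ F ∈ NCASpanningTrees T, ∃ m, Fs m = F)
    (hord : ∀ l m, l < m → treeLexLT (Fs l) (Fs m))
    (hRs : ∀ m e, e ∈ Rs m ↔
      e ∈ Fs m ∧ RootPoly ((Fs m).erase e) ⊆ ⋃ l < m, RootPoly (Fs l)) :
    IsShellingRestriction Fs Rs where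
  subset m e he := ((hRs m e).1 he).1
  exists_notMem l m hlm := by
    obtain ⟨e, hem, hel, C, hC, hsub, hlt⟩ :=
      exists_exchange hT hnc (hmem l) (hmem m) (hord l m hlm)
    obtain ⟨l', rfl⟩ := hsurj C hC
    have hl'm : l' < m := by
      by_contra! hle
      obtain rfl | hlt' := hle.eq_or_lt
      exacts [hlt.asymm hlt, hlt.asymm (hord _ _ hlt')]
    exact ⟨e, (hRs m e).2 ⟨hem, (rootPoly_mono hsub).trans (
      (Set.subset_biUnion_of_mem (u := fun l => RootPoly (Fs l)) hl'm))⟩, hel⟩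
  cone_erase_subset m e he x hx := by
    obtain ⟨-, hcover⟩ := (hRs m e).1 he
    obtain ⟨a, ha, hax⟩ := exists_smul_mem_rootPoly
      (fun f hf => (hmem m).1.1 f (Finset.mem_of_mem_erase hf)) hx
    obtain ⟨l, hlm, hl⟩ := Set.mem_iUnion₂.1 (hcover hax)
    refine Set.mem_iUnion₂.2 ⟨l, hlm, ?_⟩
    rw [← inv_smul_smul₀ ha.ne' x]
    exact smul_mem_cone (inv_nonneg.2 ha.le) (rootPoly_subset_cone _ hl)

end Shelling

section Counting

/-- The natural weightings supported on `F`, of total weight at most `t` and nonzero on `R`. For a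
tree and its restriction set they encode the lattice points of the `t`-th dilate that belong to
the cone of the tree but to no earlier cone. -/
def positiveWeights {α : Type*} [DecidableEq α] (F R : Finset α) (t : ℕ) : Finset (α →₀ ℕ) :=
  (Finset.range (t + 1)).biUnion fun s =>
    (F.finsuppAntidiag s).filter fun d => ∀ e ∈ R, d e ≠ 0

section PositiveWeights

variable {α : Type*} [DecidableEq α] {G R : Finset α}

lemma mem_positiveWeights {t : ℕ} {d : α →₀ ℕ} : d ∈ positiveWeights G R t ↔
    ∑ e ∈ G, d e ≤ t ∧ d.support ⊆ G ∧ ∀ e ∈ R, d e ≠ 0 := by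
  simp only [positiveWeights, Finset.mem_biUnion, Finset.mem_range, Finset.mem_filter,
    Finset.mem_finsuppAntidiag, Order.lt_add_one_iff]
  exact ⟨fun ⟨s, hs, ⟨hsum, hsub⟩, hpos⟩ => ⟨hsum.trans_le hs, hsub, hpos⟩,
    fun ⟨hle, hsub, hpos⟩ => ⟨_, hle, ⟨rfl, hsub⟩, hpos⟩⟩

lemma coeff_X_pow_mul_mk_one_pow (hR : R ⊆ G) (s : ℕ) :
    PowerSeries.coeff s (PowerSeries.X ^ R.card * PowerSeries.mk 1 ^ G.card : PowerSeries ℚ) =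
      ((G.finsuppAntidiag s).filter fun d => ∀ e ∈ R, d e ≠ 0).card := by
  have hprod : (PowerSeries.X ^ R.card * PowerSeries.mk 1 ^ G.card : PowerSeries ℚ) =
      ∏ e ∈ G, (if e ∈ R then PowerSeries.X else 1) * PowerSeries.mk 1 := by
    rw [Finset.prod_mul_distrib, Finset.prod_ite_mem, Finset.inter_eq_right.2 hR,
      Finset.prod_const, Finset.prod_const]
  have hcoeff : ∀ (e : α) (j : ℕ), PowerSeries.coeff j
      ((if e ∈ R then PowerSeries.X else 1) * PowerSeries.mk 1 : PowerSeries ℚ) =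
        if e ∈ R → j ≠ 0 then 1 else 0 := fun e j => by
    cases j <;> by_cases he : e ∈ R <;> simp [he, PowerSeries.coeff_succ_X_mul]
  rw [hprod, PowerSeries.coeff_prod, Finset.card_filter, Nat.cast_sum]
  refine Finset.sum_congr rfl fun d _ => ?_
  simp only [hcoeff, Finset.prod_boole, Nat.cast_ite, Nat.cast_one, Nat.cast_zero]
  exact if_congr ⟨fun h e he => h e (hR he) he, fun h e _ => h e⟩ rfl rfl

lemma card_positiveWeights (G R : Finset α) (t : ℕ) : (positiveWeights G R t).card =
    ∑ s ∈ Finset.range (t + 1), ((G.finsuppAntidiag s).filter fun d => ∀ e ∈ R, d e ≠ 0).card := by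
  refine Finset.card_biUnion fun s _ s' _ hne => Finset.disjoint_left.2 fun d hd hd' => hne ?_
  rw [Finset.mem_filter, Finset.mem_finsuppAntidiag] at hd hd'
  exact hd.1.1.symm.trans hd'.1.1

lemma mk_card_positiveWeights (hR : R ⊆ G) :
    PowerSeries.mk (fun t => ((positiveWeights G R t).card : ℚ)) =
      PowerSeries.mk 1 ^ (G.card + 1) * PowerSeries.X ^ R.card := by
  have hmul : (PowerSeries.mk 1 ^ (G.card + 1) * PowerSeries.X ^ R.card : PowerSeries ℚ) =
      PowerSeries.X ^ R.card * PowerSeries.mk 1 ^ G.card * PowerSeries.mk 1 := by ring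
  ext t
  rw [hmul, PowerSeries.coeff_mul, Finset.Nat.sum_antidiagonal_eq_sum_range_succ_mk,
    PowerSeries.coeff_mk, card_positiveWeights, Nat.cast_sum]
  exact Finset.sum_congr rfl fun s _ => by simp [coeff_X_pow_mul_mk_one_pow hR]

end PositiveWeights

lemma isLatticePoint_netFlow_natCast (d : Edge n → ℕ) :
    IsLatticePoint (netFlow fun e => (d e : ℝ)) := fun v =>
  ⟨∑ j, (d (v, j) : ℤ) - ∑ j, (d (j, v) : ℤ), by rw [netFlow_apply]; push_cast; rfl⟩

lemma isFlowOn_natCast {d : Edge n →₀ ℕ} (hd : d.support ⊆ F) : IsFlowOn F fun e => (d e : ℝ) :=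
  ⟨fun _ => Nat.cast_nonneg _, fun e he => by
    rw [Finsupp.notMem_support_iff.1 fun h => he (hd h), Nat.cast_zero]⟩

variable {ι : Type*} [LinearOrder ι] [Fintype ι] {Fs Rs : ι → EdgeSet n}

lemma IsShellingRestriction.setOf_latticePoint_eq_image (h : IsShellingRestriction Fs Rs)
    (hT : IsTreeG T) (hnc : Noncrossing T) (hmem : ∀ m, Fs m ∈ NCASpanningTrees T)
    (hsurj : ∀ F ∈ NCASpanningTrees T, ∃ m, Fs m = F) (t : ℕ) :
    {x ∈ dilate t (RootPoly T) | IsLatticePoint x} =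
      (fun p : (_ : ι) × (Edge n →₀ ℕ) => netFlow fun e => (p.2 e : ℝ)) ''
        ↑(Finset.univ.sigma fun m => positiveWeights (Fs m) (Rs m) t) := by
  have hF := fun m => (mem_NCASpanningTrees_iff.1 (hmem m)).1
  have hsum : ∀ {m} {d : Edge n →₀ ℕ}, d.support ⊆ Fs m →
      ((∑ e ∈ Fs m, d e : ℕ) : ℝ) = posSum (netFlow fun e => (d e : ℝ)) := fun {m d} hd => by
    rw [← (hF m).sum_eq_posSum (isFlowOn_natCast hd), Nat.cast_sum]
    exact Finset.sum_subset (Fs m).subset_univ fun e _ he => (isFlowOn_natCast hd).eq_zero e he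
  ext x
  simp only [Set.mem_ofPred_eq, Set.mem_image, Finset.mem_coe, Finset.mem_sigma, Finset.mem_univ,
    true_and, mem_positiveWeights, Sigma.exists]
  constructor
  · rintro ⟨hx, hlat⟩
    obtain ⟨hcone, hle⟩ := (mem_dilate_rootPoly_iff hT hnc hlat).1 hx
    obtain ⟨S, hS, d₀, hd₀, rfl⟩ := hT.exists_nat_flow hnc hcone hlat
    obtain ⟨m, rfl⟩ := hsurj S hS
    obtain ⟨l, c, hc, hpos, hcx⟩ := h.exists_flow_ne_zero (mem_cone_iff.2 ⟨_, hd₀, rfl⟩)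
    rw [← hcx] at hlat hle ⊢
    obtain ⟨d, rfl⟩ := (hmem l).1.exists_nat_eq_of_isLatticePoint hc hlat
    have hd : (Finsupp.equivFunOnFinite.symm d).support ⊆ Fs l := fun e he =>
      hc.mem_of_ne_zero (Nat.cast_ne_zero.2 (Finsupp.mem_support_iff.1 he))
    exact ⟨l, Finsupp.equivFunOnFinite.symm d,
      ⟨Nat.cast_le.1 ((hsum hd).trans_le hle), hd, fun e he => Nat.cast_ne_zero.1 (hpos e he)⟩, rfl⟩
  · rintro ⟨m, d, ⟨hle, hd, -⟩, rfl⟩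
    have hlat := isLatticePoint_netFlow_natCast d
    refine ⟨(mem_dilate_rootPoly_iff hT hnc hlat).2 ⟨?_, (hsum hd).symm.trans_le ?_⟩, hlat⟩
    · exact (isFlowOn_natCast hd).netFlow_mem_cone fun e he =>
        ev_mem_cone_of_mem_closureT ((mem_NCASpanningTrees_iff.1 (hmem m)).2.2 e he)
    · exact Nat.cast_le.2 hle

theorem IsShellingRestriction.latticeCount_eq_sum (h : IsShellingRestriction Fs Rs)
    (hT : IsTreeG T) (hnc : Noncrossing T) (hmem : ∀ m, Fs m ∈ NCASpanningTrees T)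
    (hsurj : ∀ F ∈ NCASpanningTrees T, ∃ m, Fs m = F) (t : ℕ) :
    latticeCount (RootPoly T) t = ∑ m, (positiveWeights (Fs m) (Rs m) t).card := by
  have hF := fun m => (mem_NCASpanningTrees_iff.1 (hmem m)).1
  rw [← Finset.card_sigma, ← Set.ncard_coe_finset, latticeCount]
  refine (congrArg Set.ncard (h.setOf_latticePoint_eq_image hT hnc hmem hsurj t)).trans
    (Set.InjOn.ncard_image ?_)
  rintro ⟨l, d⟩ hd ⟨m, d'⟩ hd' heq
  simp only [Finset.mem_coe, Finset.mem_sigma, mem_positiveWeights] at hd hd'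
  obtain ⟨-, -, hd, hpos⟩ := hd
  obtain ⟨-, -, hd', hpos'⟩ := hd'
  obtain rfl := h.eq_of_netFlow_eq hF (isFlowOn_natCast hd) (isFlowOn_natCast hd')
    (fun e he => Nat.cast_ne_zero.2 (hpos e he)) (fun e he => Nat.cast_ne_zero.2 (hpos' e he)) heq
  have hdd' := (hF l).flow_unique (hF l) (isFlowOn_natCast hd) (isFlowOn_natCast hd') heq
  obtain rfl : d = d' := Finsupp.ext fun e => Nat.cast_injective (congrFun hdd' e)
  rfl

lemma latticeCount_rootPoly_zero (E : EdgeSet n) : latticeCount (RootPoly E) 0 = 1 := by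
  refine Set.ncard_eq_one.2 ⟨0, Set.eq_singleton_iff_unique_mem.2 ⟨⟨?_, fun _ => ⟨0, by simp⟩⟩, ?_⟩⟩
  · exact ⟨0, zero_mem_rootPoly E, smul_zero _⟩
  · rintro _ ⟨⟨x, -, rfl⟩, -⟩
    simp

theorem IsShellingRestriction.mk_latticeCount_eq_sum (h : IsShellingRestriction Fs Rs)
    (hT : IsTreeG T) (hnc : Noncrossing T) (hmem : ∀ m, Fs m ∈ NCASpanningTrees T)
    (hsurj : ∀ F ∈ NCASpanningTrees T, ∃ m, Fs m = F) :
    PowerSeries.mk (fun t => (latticeCount (RootPoly T) t : ℚ)) =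
      PowerSeries.mk 1 ^ (n + 1) * ∑ m, PowerSeries.X ^ (Rs m).card := by
  have hterm : ∀ m, PowerSeries.mk (fun t => ((positiveWeights (Fs m) (Rs m) t).card : ℚ)) =
      PowerSeries.mk 1 ^ (n + 1) * PowerSeries.X ^ (Rs m).card := fun m => by
    rw [mk_card_positiveWeights (h.subset m), (hmem m).1.card_eq]
  rw [Finset.mul_sum, ← Finset.sum_congr rfl fun m _ => hterm m]
  ext t
  simp [h.latticeCount_eq_sum hT hnc hmem hsurj]

end Counting

end

/- STATEMENT 18 -/
theorem stmt18 {n : ℕ} (hn : 1 ≤ n) (T : EdgeSet n) (hT : IsTreeG T)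
    (hnc : Noncrossing T) (k : ℕ) (Ts : Fin k → EdgeSet n)
    (hmem : ∀ m, Ts m ∈ NCASpanningTrees T)
    (huniq : ∀ F ∈ NCASpanningTrees T, ∃! m : Fin k, Ts m = F)
    (hord : ∀ m m' : Fin k, m < m' → treeLexLT (Ts m) (Ts m'))
    (r : Fin k → ℕ)
    (hr : ∀ m : Fin k, r m = {e : Edge n | e ∈ Ts m ∧
      RootPoly ((Ts m).erase e) ⊆
        ⋃ l : Fin k, ⋃ (_ : l < m), RootPoly (Ts l)}.ncard) :
    (1 - PowerSeries.X : PowerSeries ℚ) ^ (n + 1) *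
      PowerSeries.mk (fun t => if t = 0 then 1 else (latticeCount (RootPoly T) t : ℚ)) =
      ∑ m : Fin k, (PowerSeries.X : PowerSeries ℚ) ^ (r m) := by
  classical
  let Rs : Fin k → EdgeSet n := fun m =>
    (Ts m).filter fun e => RootPoly ((Ts m).erase e) ⊆ ⋃ l < m, RootPoly (Ts l)
  have hr_card : ∀ m, r m = (Rs m).card := fun m => by
    rw [hr, ← Set.ncard_coe_finset, Finset.coe_filter]
  have hsurj : ∀ F ∈ NCASpanningTrees T, ∃ m, Ts m = F := fun F hF => (huniq F hF).exists
  have hRs : IsShellingRestriction Ts Rs :=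
    isShellingRestriction_of_treeLexLT hT hnc hmem hsurj hord fun m e => Finset.mem_filter
  have hcount : (fun t => if t = 0 then 1 else (latticeCount (RootPoly T) t : ℚ)) =
      fun t => (latticeCount (RootPoly T) t : ℚ) := funext fun t => by
    split_ifs with ht
    exacts [by rw [ht, latticeCount_rootPoly_zero, Nat.cast_one], rfl]
  rw [hcount, hRs.mk_latticeCount_eq_sum hT hnc hmem hsurj, ← mul_assoc, ← mul_pow,
    mul_comm (1 - PowerSeries.X), PowerSeries.mk_one_mul_one_sub_eq_one, one_pow, one_mul]
  exact Finset.sum_congr rfl fun m _ => by rw [hr_card]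

end RPaper
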